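/- arXiv:1301.6409 — 3 statements merged into one kernel-verified Lean document; each statement's English description precedes it below -/
import Mathlib

section
/- Under Assumptions 1 and 2, let t₀ ∈ [0,1], x₀, w₀ ∈ ℝⁿ, d₀ := ‖x₀ − w₀‖, let (𝐮,𝐯) ∈ 𝒰 × 𝒱, let (u*,v*) be optimal in Γ(t₀, x₀, x₀ − w₀), and set 𝐱(t) := x[t₀, x₀, 𝐮, v*](t) and 𝐰(t) := x[t₀, w₀, u*, 𝐯](t). Then for all s ∈ [t₀,1] and all (u,v) ∈ U × V: ⟨x₀ − w₀, f(s, 𝐱(s), u, v*) − f(s, 𝐰(s), u*, v)⟩ ≤ 2C(s)·d₀ + c·d₀², where C(s) := c(1 + ‖f‖)(s − t₀). -/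
open Set MeasureTheory Metric

noncomputable section

/-- `Evec n` is the euclidean space `ℝⁿ`. -/
abbrev Evec (n : ℕ) : Type := EuclideanSpace ℝ (Fin n)

/-- A (measurable) control with values in the set `K`. -/
def IsControl {d : ℕ} (K : Set (Evec d)) (u : ℝ → Evec d) : Prop :=
  Measurable u ∧ ∀ t, u t ∈ K

/-- Assumption 1: `U`, `V` are nonempty compact sets, `f` is bounded (in norm) by `Mf`
on `[0,1] × ℝⁿ × U × V`, and `f` is `c`-Lipschitz in `(t,x)`, uniformly in `(u,v)`. -/
structure Assumption1 {n p q : ℕ} (f : ℝ → Evec n → Evec p → Evec q → Evec n)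
    (U : Set (Evec p)) (V : Set (Evec q)) (Mf c : ℝ) : Prop where
  compactU : IsCompact U
  nonemptyU : U.Nonempty
  compactV : IsCompact V
  nonemptyV : V.Nonempty
  Mf_nonneg : 0 ≤ Mf
  c_nonneg : 0 ≤ c
  bounded : ∀ t ∈ Icc (0:ℝ) 1, ∀ (x : Evec n), ∀ u ∈ U, ∀ v ∈ V, ‖f t x u v‖ ≤ Mf
  lipschitz : ∀ s ∈ Icc (0:ℝ) 1, ∀ t ∈ Icc (0:ℝ) 1, ∀ (x y : Evec n), ∀ u ∈ U, ∀ v ∈ V,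
      ‖f t x u v - f s y u v‖ ≤ c * (|t - s| + ‖x - y‖)

/-- `sol` is a solution operator for the dynamics `ż(t) = f(t,z(t),u(t),v(t))`:
for any initial time `t₀ ∈ [0,1]`, initial state `z₀` and controls `(u,v)`,
`sol t₀ z₀ u v` solves the corresponding integral equation on `[t₀,1]`. -/
def IsSolOp {n p q : ℕ} (f : ℝ → Evec n → Evec p → Evec q → Evec n)
    (U : Set (Evec p)) (V : Set (Evec q))
    (sol : ℝ → Evec n → (ℝ → Evec p) → (ℝ → Evec q) → ℝ → Evec n) : Prop :=
  ∀ t₀ ∈ Icc (0:ℝ) 1, ∀ (z₀ : Evec n) (u : ℝ → Evec p) (v : ℝ → Evec q),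
    IsControl U u → IsControl V v →
      sol t₀ z₀ u v t₀ = z₀ ∧
      ∀ t ∈ Icc t₀ 1,
        sol t₀ z₀ u v t = z₀ + ∫ s in t₀..t, f s (sol t₀ z₀ u v s) (u s) (v s)

/-- The maxmin `H⁻(t,x,ξ) = sup_{u ∈ U} inf_{v ∈ V} ⟨ξ, f(t,x,u,v)⟩` of the local game. -/
def Hm {n p q : ℕ} (f : ℝ → Evec n → Evec p → Evec q → Evec n)
    (U : Set (Evec p)) (V : Set (Evec q)) (t : ℝ) (x ξ : Evec n) : ℝ :=
  ⨆ u : U, ⨅ v : V, (inner ℝ ξ (f t x (↑u) (↑v)) : ℝ)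

/-- The minmax `H⁺(t,x,ξ) = inf_{v ∈ V} sup_{u ∈ U} ⟨ξ, f(t,x,u,v)⟩` of the local game. -/
def Hp {n p q : ℕ} (f : ℝ → Evec n → Evec p → Evec q → Evec n)
    (U : Set (Evec p)) (V : Set (Evec q)) (t : ℝ) (x ξ : Evec n) : ℝ :=
  ⨅ v : V, ⨆ u : U, (inner ℝ ξ (f t x (↑u) (↑v)) : ℝ)

/-- `ustar` is an optimal action of player 1 in the local game `Γ(t,x,ξ)`:
it attains the max in `H⁻(t,x,ξ)`. -/
def OptimalU {n p q : ℕ} (f : ℝ → Evec n → Evec p → Evec q → Evec n)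
    (U : Set (Evec p)) (V : Set (Evec q)) (t : ℝ) (x ξ : Evec n) (ustar : Evec p) : Prop :=
  ustar ∈ U ∧ (⨅ v : V, (inner ℝ ξ (f t x ustar (↑v)) : ℝ)) = Hm f U V t x ξ

/-- `vstar` is an optimal action of player 2 in the local game `Γ(t,x,ξ)`:
it attains the min in `H⁺(t,x,ξ)`. -/
def OptimalV {n p q : ℕ} (f : ℝ → Evec n → Evec p → Evec q → Evec n)
    (U : Set (Evec p)) (V : Set (Evec q)) (t : ℝ) (x ξ : Evec n) (vstar : Evec q) : Prop :=
  vstar ∈ V ∧ (⨆ u : U, (inner ℝ ξ (f t x (↑u) vstar) : ℝ)) = Hp f U V t x ξ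

/-- Assumption 2 (Isaacs' condition): every local game has a value. -/
def Isaacs {n p q : ℕ} (f : ℝ → Evec n → Evec p → Evec q → Evec n)
    (U : Set (Evec p)) (V : Set (Evec q)) : Prop :=
  ∀ t ∈ Icc (0:ℝ) 1, ∀ x ξ : Evec n, Hm f U V t x ξ = Hp f U V t x ξ

/-- The time-`t` section `𝒲(t)` of a set `𝒲 ⊆ ℝ × ℝⁿ`. -/
def sec {n : ℕ} (W : Set (ℝ × Evec n)) (t : ℝ) : Set (Evec n) := {x | (t, x) ∈ W}

/-- Property P1: every section `𝒲(t)`, `t ∈ [t₀,1]`, is closed and nonempty. -/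
def PropP1 {n : ℕ} (t₀ : ℝ) (W : Set (ℝ × Evec n)) : Prop :=
  ∀ t ∈ Icc t₀ 1, IsClosed (sec W t) ∧ (sec W t).Nonempty

/-- Property P2: for every `(t,x) ∈ 𝒲` and `t' ∈ [t,1]`,
`sup_{u ∈ U} inf_{𝐯 ∈ 𝒱} D(x[t,x,u,𝐯](t'), 𝒲(t')) = 0` (stated using that the
distance is nonnegative: every player-1 constant control `u` admits ε-good replies). -/
def PropP2 {n p q : ℕ} (U : Set (Evec p)) (V : Set (Evec q))
    (sol : ℝ → Evec n → (ℝ → Evec p) → (ℝ → Evec q) → ℝ → Evec n)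
    (W : Set (ℝ × Evec n)) : Prop :=
  ∀ t x, (t, x) ∈ W → ∀ t' ∈ Icc t 1, ∀ u ∈ U, ∀ ε > 0,
    ∃ vc : ℝ → Evec q, IsControl V vc ∧
      infDist (sol t x (fun _ => u) vc t') (sec W t') < ε

/-!
By Isaacs' condition, the optimal pair `(u*, v*)` is a saddle point of `Γ(t₀, x₀, ξ)`, where
`ξ = x₀ - w₀`, so `⟨ξ, f(t₀, x₀, u, v*)⟩ ≤ ⟨ξ, f(t₀, x₀, u*, v)⟩`. Passing from this to the claim
costs `‖ξ‖` times the variation of `f` between `(t₀, x₀)` and the two points `(s, 𝐱(s))`,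
`(s, 𝐰(s))`. The dynamics enter only through the speed bound `‖f‖`, which keeps `𝐱(s)` and `𝐰(s)`
within `‖f‖ (s - t₀)` of `x₀` and `w₀`; the extra `c d₀²` is the price of comparing `𝐰(s)` with
`x₀` rather than with `w₀`.
-/

section Preliminaries

open Bornology

open scoped InnerProductSpace

lemma isSaddlePointOn_of_iSup_le_iInf {X Y β : Type*} [ConditionallyCompleteLattice β]
    {S : Set X} {T : Set Y} {g : X → Y → β} {a : X} {b : Y}
    (ha : BddAbove (range fun y : T ↦ g a y)) (hb : BddBelow (range fun x : S ↦ g x b))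
    (h : ⨆ y : T, g a y ≤ ⨅ x : S, g x b) : IsSaddlePointOn S T g a b :=
  fun x hx y hy ↦ calc
    g a y ≤ ⨆ y : T, g a y := le_ciSup ha ⟨y, hy⟩
    _ ≤ ⨅ x : S, g x b := h
    _ ≤ g x b := ciInf_le hb ⟨x, hx⟩

variable {E : Type*} [NormedAddCommGroup E] [InnerProductSpace ℝ E]

lemma isBounded_range_inner_of_norm_le {ι : Type*} {g : ι → E} {M : ℝ} (ξ : E)
    (hg : ∀ i, ‖g i‖ ≤ M) : IsBounded (range fun i ↦ ⟪ξ, g i⟫_ℝ) := by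
  refine isBounded_iff_forall_norm_le.2 ⟨‖ξ‖ * M, forall_mem_range.2 fun i ↦ ?_⟩
  grw [norm_inner_le_norm, hg i]

lemma inner_sub_le_of_inner_le_inner {ξ a b a₀ b₀ : E} (h : ⟪ξ, a₀⟫_ℝ ≤ ⟪ξ, b₀⟫_ℝ) :
    ⟪ξ, a - b⟫_ℝ ≤ ‖ξ‖ * (‖a - a₀‖ + ‖b - b₀‖) := calc
  ⟪ξ, a - b⟫_ℝ = ⟪ξ, a - a₀⟫_ℝ + ⟪ξ, b₀ - b⟫_ℝ + (⟪ξ, a₀⟫_ℝ - ⟪ξ, b₀⟫_ℝ) := by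
    simp only [inner_sub_right]
    ring
  _ ≤ ‖ξ‖ * ‖a - a₀‖ + ‖ξ‖ * ‖b₀ - b‖ + 0 := by
    gcongr
    · exact real_inner_le_norm _ _
    · exact real_inner_le_norm _ _
    · exact sub_nonpos.2 h
  _ = ‖ξ‖ * (‖a - a₀‖ + ‖b - b₀‖) := by
    rw [norm_sub_rev b₀ b]
    ring

end Preliminaries

lemma OptimalU.isSaddlePointOn {n p q : ℕ} {f : ℝ → Evec n → Evec p → Evec q → Evec n}
    {U : Set (Evec p)} {V : Set (Evec q)} {M t : ℝ} {x ξ : Evec n} {ustar : Evec p}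
    {vstar : Evec q} (hu : OptimalU f U V t x ξ ustar) (hv : OptimalV f U V t x ξ vstar)
    (hf : ∀ u ∈ U, ∀ v ∈ V, ‖f t x u v‖ ≤ M) (hval : Hp f U V t x ξ ≤ Hm f U V t x ξ) :
    IsSaddlePointOn V U (fun v u ↦ inner ℝ ξ (f t x u v)) vstar ustar :=
  isSaddlePointOn_of_iSup_le_iInf
    (isBounded_range_inner_of_norm_le ξ fun u : U ↦ hf u u.2 vstar hv.1).bddAbove
    (isBounded_range_inner_of_norm_le ξ fun v : V ↦ hf ustar hu.1 v v.2).bddBelow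
    (by rwa [hv.2, hu.2])

lemma isControl_const {d : ℕ} {K : Set (Evec d)} {k : Evec d} (hk : k ∈ K) :
    IsControl K fun _ ↦ k :=
  ⟨measurable_const, fun _ ↦ hk⟩

lemma IsSolOp.norm_sub_initial_le {n p q : ℕ} {f : ℝ → Evec n → Evec p → Evec q → Evec n}
    {U : Set (Evec p)} {V : Set (Evec q)}
    {sol : ℝ → Evec n → (ℝ → Evec p) → (ℝ → Evec q) → ℝ → Evec n} {M t₀ s : ℝ}
    {u : ℝ → Evec p} {v : ℝ → Evec q} (hsol : IsSolOp f U V sol)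
    (hf : ∀ t ∈ Icc (0 : ℝ) 1, ∀ z, ∀ u ∈ U, ∀ v ∈ V, ‖f t z u v‖ ≤ M)
    (ht₀ : t₀ ∈ Icc (0 : ℝ) 1) (hs : s ∈ Icc t₀ 1) (hu : IsControl U u) (hv : IsControl V v)
    (z₀ : Evec n) : ‖sol t₀ z₀ u v s - z₀‖ ≤ M * |s - t₀| := by
  rw [(hsol t₀ ht₀ z₀ u v hu hv).2 s hs, add_sub_cancel_left]
  refine intervalIntegral.norm_integral_le_of_norm_le_const fun r hr ↦ ?_
  rw [uIoc_of_le hs.1] at hr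
  exact hf r ⟨ht₀.1.trans hr.1.le, hr.2.trans hs.2⟩ _ _ (hu.2 r) _ (hv.2 r)

/-- `x` and `w` are the states at time `s` of two motions of speed at most `M` that start at time
`t₀` from `x₀` and `w₀`. -/
theorem statement1_general {E A B : Type*} [NormedAddCommGroup E] [InnerProductSpace ℝ E]
    {f : ℝ → E → A → B → E} {U : Set A} {V : Set B} {M c t₀ s : ℝ} {x₀ w₀ x w : E}
    {ustar : A} {vstar : B} (hc : 0 ≤ c)
    (hf : ∀ y z, ∀ u ∈ U, ∀ v ∈ V, ‖f s y u v - f t₀ z u v‖ ≤ c * (|s - t₀| + ‖y - z‖))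
    (hustar : ustar ∈ U) (hvstar : vstar ∈ V)
    (hsaddle : IsSaddlePointOn V U (fun v u ↦ inner ℝ (x₀ - w₀) (f t₀ x₀ u v)) vstar ustar)
    (hx : ‖x - x₀‖ ≤ M * |s - t₀|) (hw : ‖w - w₀‖ ≤ M * |s - t₀|) :
    ∀ u ∈ U, ∀ v ∈ V, inner ℝ (x₀ - w₀) (f s x u vstar - f s w ustar v) ≤
      2 * (c * (1 + M) * |s - t₀|) * ‖x₀ - w₀‖ + c * ‖x₀ - w₀‖ ^ 2 := by
  intro u hu v hv
  have hwx : ‖w - x₀‖ ≤ M * |s - t₀| + ‖x₀ - w₀‖ := by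
    grw [norm_sub_le_norm_sub_add_norm_sub w w₀ x₀, hw, norm_sub_rev w₀ x₀]
  calc inner ℝ (x₀ - w₀) (f s x u vstar - f s w ustar v)
      ≤ ‖x₀ - w₀‖ * (‖f s x u vstar - f t₀ x₀ u vstar‖ +
          ‖f s w ustar v - f t₀ x₀ ustar v‖) :=
        inner_sub_le_of_inner_le_inner (hsaddle v hv u hu)
    _ ≤ ‖x₀ - w₀‖ * (c * (|s - t₀| + ‖x - x₀‖) + c * (|s - t₀| + ‖w - x₀‖)) := by
        grw [hf x x₀ u hu vstar hvstar, hf w x₀ ustar hustar v hv]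
    _ ≤ ‖x₀ - w₀‖ * (c * (|s - t₀| + M * |s - t₀|) +
          c * (|s - t₀| + (M * |s - t₀| + ‖x₀ - w₀‖))) := by
        grw [hx, hwx]
    _ = 2 * (c * (1 + M) * |s - t₀|) * ‖x₀ - w₀‖ + c * ‖x₀ - w₀‖ ^ 2 := by ring

/-- the Claim in the proof of Lemma 1: for all `s ∈ [t₀,1]` and all
`(u,v) ∈ U × V`, `⟨x₀-w₀, f(s,𝐱(s),u,v*) - f(s,𝐰(s),u*,v)⟩ ≤ 2C(s)d₀ + c d₀²`,
where `C(s) = c(1+‖f‖)(s-t₀)` and `d₀ = ‖x₀-w₀‖`. -/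
theorem statement1 {n p q : ℕ}
    (f : ℝ → Evec n → Evec p → Evec q → Evec n)
    (U : Set (Evec p)) (V : Set (Evec q)) (Mf c : ℝ)
    (hA1 : Assumption1 f U V Mf c)
    (hA2 : Isaacs f U V)
    (sol : ℝ → Evec n → (ℝ → Evec p) → (ℝ → Evec q) → ℝ → Evec n)
    (hsol : IsSolOp f U V sol)
    (t₀ : ℝ) (ht₀ : t₀ ∈ Icc (0:ℝ) 1)
    (x₀ w₀ : Evec n)
    (uc : ℝ → Evec p) (vc : ℝ → Evec q)
    (huc : IsControl U uc) (hvc : IsControl V vc)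
    (ustar : Evec p) (vstar : Evec q)
    (hustar : OptimalU f U V t₀ x₀ (x₀ - w₀) ustar)
    (hvstar : OptimalV f U V t₀ x₀ (x₀ - w₀) vstar) :
    ∀ s ∈ Icc t₀ 1, ∀ u ∈ U, ∀ v ∈ V,
      (inner ℝ (x₀ - w₀)
          (f s (sol t₀ x₀ uc (fun _ => vstar) s) u vstar -
            f s (sol t₀ w₀ (fun _ => ustar) vc s) ustar v) : ℝ) ≤
        2 * (c * (1 + Mf) * (s - t₀)) * ‖x₀ - w₀‖ + c * ‖x₀ - w₀‖ ^ 2 := by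
  intro s hs
  rw [← abs_of_nonneg (sub_nonneg.2 hs.1)]
  exact statement1_general hA1.c_nonneg
    (hA1.lipschitz t₀ ht₀ s (Icc_subset_Icc_left ht₀.1 hs)) hustar.1 hvstar.1
    (hustar.isSaddlePointOn hvstar (hA1.bounded t₀ ht₀ x₀) (hA2 t₀ ht₀ x₀ _).ge)
    (hsol.norm_sub_initial_le hA1.bounded ht₀ hs huc (isControl_const hvstar.1) x₀)
    (hsol.norm_sub_initial_le hA1.bounded ht₀ hs (isControl_const hustar.1) hvc w₀)
end
end

section
/- Under Assumption 1, let t₀ ∈ [0,1], x₀, w₀ ∈ ℝⁿ, d₀ := ‖x₀ − w₀‖, let 𝐮 ∈ 𝒰 be a control, let v* ∈ V attain the min in H⁺(t₀, x₀, x₀ − w₀), and set 𝐱(t) := x[t₀, x₀, 𝐮, v*](t). Then for all s ∈ [t₀,1] and all u ∈ U: ⟨x₀ − w₀, f(s, 𝐱(s), u, v*)⟩ ≤ H⁺(t₀, x₀, x₀ − w₀) + C(s)·d₀, where C(s) := c(1 + ‖f‖)(s − t₀). -/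
open Set MeasureTheory Metric

noncomputable section

/-!
Once player 2 has frozen the action `v`, the trajectory has speed at most `‖f‖`, so at time `s` it
is within `‖f‖ (s - t₀)` of `x₀`. As `f` is Lipschitz in `(t, x)`, the velocity produced by any
action `u` has then changed by at most `c (1 + ‖f‖) (s - t₀)` since time `t₀`, when its inner
product with `ξ` was at most `⨆ u, ⟨ξ, f(t₀, x₀, u, v)⟩`. For an optimal `v` that supremum is
`H⁺(t₀, x₀, ξ)`.
-/

section InnerProduct

variable {E : Type*} [NormedAddCommGroup E] [InnerProductSpace ℝ E]

lemma real_inner_le_inner_add_norm_sub_mul_norm (ξ a b : E) :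
    inner ℝ ξ a ≤ inner ℝ ξ b + ‖a - b‖ * ‖ξ‖ := by
  have cauchy_schwarz := real_inner_le_norm ξ (a - b)
  rw [inner_sub_right] at cauchy_schwarz
  linarith

lemma real_inner_le_ciSup_inner_of_norm_le {ι : Type*} {a : ι → E} {M : ℝ}
    (ha : ∀ i, ‖a i‖ ≤ M) (ξ : E) (i : ι) :
    inner ℝ ξ (a i) ≤ ⨆ j, inner ℝ ξ (a j) := by
  refine le_ciSup (f := fun j => inner ℝ ξ (a j)) ⟨‖ξ‖ * M, ?_⟩ i
  rintro _ ⟨j, rfl⟩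
  exact (real_inner_le_norm ξ (a j)).trans (by gcongr; exact ha j)

end InnerProduct

lemma norm_sub_le_of_eq_add_integral {E : Type*} [NormedAddCommGroup E] [NormedSpace ℝ E]
    {φ : ℝ → E} {x y : E} {M t₀ s : ℝ} (hφ : ∀ r ∈ uIoc t₀ s, ‖φ r‖ ≤ M)
    (hy : y = x + ∫ r in t₀..s, φ r) :
    ‖y - x‖ ≤ M * |s - t₀| := by
  rw [hy, add_sub_cancel_left]
  exact intervalIntegral.norm_integral_le_of_norm_le_const hφ

theorem statement2_general {E P Q : Type*}
    [NormedAddCommGroup E] [InnerProductSpace ℝ E] [CompleteSpace E]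
    {f : ℝ → E → P → Q → E} {U : Set P} {V : Set Q} {a b M c : ℝ} (hc : 0 ≤ c)
    (hbound : ∀ t ∈ Icc a b, ∀ x, ∀ u ∈ U, ∀ v ∈ V, ‖f t x u v‖ ≤ M)
    (hlip : ∀ s ∈ Icc a b, ∀ t ∈ Icc a b, ∀ x y, ∀ u ∈ U, ∀ v ∈ V,
      ‖f t x u v - f s y u v‖ ≤ c * (|t - s| + ‖x - y‖))
    {t₀ : ℝ} (ht₀ : t₀ ∈ Icc a b) {x₀ : E} {X : ℝ → E} {uc : ℝ → P} (huc : ∀ t, uc t ∈ U)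
    {v : Q} (hv : v ∈ V)
    (hX : ∀ t ∈ Icc t₀ b, X t = x₀ + ∫ r in t₀..t, f r (X r) (uc r) v) (ξ : E) :
    ∀ s ∈ Icc t₀ b, ∀ u ∈ U,
      inner ℝ ξ (f s (X s) u v) ≤
        (⨆ u' : U, inner ℝ ξ (f t₀ x₀ u' v)) + c * (1 + M) * (s - t₀) * ‖ξ‖ := by
  intro s hs u hu
  have hs' : s ∈ Icc a b := Icc_subset_Icc_left ht₀.1 hs
  have displacement : ‖X s - x₀‖ ≤ M * |s - t₀| := by
    refine norm_sub_le_of_eq_add_integral (fun r hr => ?_) (hX s hs)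
    rw [uIoc_of_le hs.1] at hr
    exact hbound r ⟨ht₀.1.trans hr.1.le, hr.2.trans hs.2⟩ _ _ (huc r) _ hv
  have velocity_change : ‖f s (X s) u v - f t₀ x₀ u v‖ ≤ c * (1 + M) * (s - t₀) :=
    calc
      ‖f s (X s) u v - f t₀ x₀ u v‖
        ≤ c * (|s - t₀| + ‖X s - x₀‖) := hlip t₀ ht₀ s hs' _ _ u hu v hv
      _ ≤ c * (|s - t₀| + M * |s - t₀|) := by gcongr
      _ = c * (1 + M) * (s - t₀) := by rw [abs_of_nonneg (sub_nonneg.2 hs.1)]; ring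
  calc
    inner ℝ ξ (f s (X s) u v)
      ≤ inner ℝ ξ (f t₀ x₀ u v) + ‖f s (X s) u v - f t₀ x₀ u v‖ * ‖ξ‖ :=
        real_inner_le_inner_add_norm_sub_mul_norm _ _ _
    _ ≤ (⨆ u' : U, inner ℝ ξ (f t₀ x₀ u' v)) + c * (1 + M) * (s - t₀) * ‖ξ‖ := by
        gcongr
        exact real_inner_le_ciSup_inner_of_norm_le (a := fun u' : U => f t₀ x₀ u' v)
          (fun u' => hbound t₀ ht₀ x₀ u' u'.2 v hv) ξ ⟨u, hu⟩

/-- if `v*` attains the min in `H⁺(t₀,x₀,x₀-w₀)` and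
`𝐱(t) = x[t₀,x₀,𝐮,v*](t)`, then for all `s ∈ [t₀,1]` and `u ∈ U`,
`⟨x₀-w₀, f(s,𝐱(s),u,v*)⟩ ≤ H⁺(t₀,x₀,x₀-w₀) + C(s)·d₀` with `C(s) = c(1+‖f‖)(s-t₀)`. -/
theorem statement2 {n p q : ℕ}
    (f : ℝ → Evec n → Evec p → Evec q → Evec n)
    (U : Set (Evec p)) (V : Set (Evec q)) (Mf c : ℝ)
    (hA1 : Assumption1 f U V Mf c)
    (sol : ℝ → Evec n → (ℝ → Evec p) → (ℝ → Evec q) → ℝ → Evec n)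
    (hsol : IsSolOp f U V sol)
    (t₀ : ℝ) (ht₀ : t₀ ∈ Icc (0:ℝ) 1)
    (x₀ w₀ : Evec n)
    (uc : ℝ → Evec p) (huc : IsControl U uc)
    (vstar : Evec q)
    (hvstar : OptimalV f U V t₀ x₀ (x₀ - w₀) vstar) :
    ∀ s ∈ Icc t₀ 1, ∀ u ∈ U,
      (inner ℝ (x₀ - w₀) (f s (sol t₀ x₀ uc (fun _ => vstar) s) u vstar) : ℝ) ≤
        Hp f U V t₀ x₀ (x₀ - w₀) + (c * (1 + Mf) * (s - t₀)) * ‖x₀ - w₀‖ := by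
  rw [← hvstar.2]
  exact statement2_general hA1.c_nonneg hA1.bounded hA1.lipschitz ht₀ huc.2 hvstar.1
    (hsol t₀ ht₀ x₀ uc _ huc ⟨measurable_const, fun _ => hvstar.1⟩).2 (x₀ - w₀)
end
end

section
/- Under Assumption 1, let t₀ ∈ [0,1], x₀ ∈ ℝⁿ, and let φ : [t₀,1] × ℝⁿ → ℝ satisfy properties (i) and (ii). Then for every ℓ ≥ φ(t₀,x₀), the ℓ-level set 𝒲^φ_ℓ := {(t,x) ∈ [t₀,1] × ℝⁿ : φ(t,x) ≤ ℓ} satisfies P1 and P2, i.e.: 𝒲^φ_ℓ(t) is closed and nonempty for every t ∈ [t₀,1], and for every (t,x) ∈ 𝒲^φ_ℓ and t' ∈ [t,1], sup_{u∈U} inf_{𝐯∈𝒱} D(x[t,x,u,𝐯](t'), 𝒲^φ_ℓ(t')) = 0. -/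
open Set MeasureTheory Metric

noncomputable section

/-- Property (i): `x ↦ φ(t,x)` is lower semicontinuous for every `t ∈ [t₀,1]`. -/
def PhiI {n : ℕ} (t₀ : ℝ) (φ : ℝ → Evec n → ℝ) : Prop :=
  ∀ t ∈ Icc t₀ 1, LowerSemicontinuous (φ t)

/-- Property (ii): `φ(t,x) ≥ sup_{u ∈ U} inf_{𝐯 ∈ 𝒱} φ(t', x[t,x,u,𝐯](t'))`
for all `(t,x)` and `t' ∈ [t,1]` (stated via ε-good replies, which is equivalent). -/
def PhiII {n p q : ℕ} (U : Set (Evec p)) (V : Set (Evec q))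
    (sol : ℝ → Evec n → (ℝ → Evec p) → (ℝ → Evec q) → ℝ → Evec n)
    (t₀ : ℝ) (φ : ℝ → Evec n → ℝ) : Prop :=
  ∀ t ∈ Icc t₀ 1, ∀ x : Evec n, ∀ t' ∈ Icc t 1, ∀ u ∈ U, ∀ ε > 0,
    ∃ vc : ℝ → Evec q, IsControl V vc ∧
      φ t' (sol t x (fun _ => u) vc t') ≤ φ t x + ε

/-- Property (iii): `φ(1,·) ≥ g`. -/
def PhiIII {n : ℕ} (g : Evec n → ℝ) (φ : ℝ → Evec n → ℝ) : Prop :=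
  ∀ x : Evec n, g x ≤ φ 1 x

/-!
Against a constant control of player 1, the positions reachable at a given time form a bounded,
hence relatively compact set. The lower semicontinuous function `φ t'` attains its minimum on the
closure of this set, and by (ii) the minimum is at most `φ t x`. A minimizer therefore lies in the
level set and is a limit of reachable positions.
-/

/-- The positions at time `t'` of the trajectories issued from `(t, x)` when player 1 plays the
control `u` and player 2 plays an arbitrary control with values in `V`. -/
def reachableSet {n p q : ℕ} (V : Set (Evec q))
    (sol : ℝ → Evec n → (ℝ → Evec p) → (ℝ → Evec q) → ℝ → Evec n)
    (t : ℝ) (x : Evec n) (u : ℝ → Evec p) (t' : ℝ) : Set (Evec n) :=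
  (fun v => sol t x u v t') '' {v | IsControl V v}

/-- The level set `𝒲^φ_ℓ`. The values of `φ` outside `[t₀,1] × ℝⁿ` are discarded. -/
def levelSet {n : ℕ} (t₀ : ℝ) (φ : ℝ → Evec n → ℝ) (ℓ : ℝ) : Set (ℝ × Evec n) :=
  {z | z.1 ∈ Icc t₀ 1 ∧ φ z.1 z.2 ≤ ℓ}

theorem exists_mem_closure_le_of_forall_gt {X α : Type*} [TopologicalSpace X] [LinearOrder α]
    [DenselyOrdered α] [NoMaxOrder α] {S : Set X} (hS : IsCompact (closure S)) {g : X → α}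
    (hg : LowerSemicontinuousOn g (closure S)) {a : α} (h : ∀ b > a, ∃ z ∈ S, g z ≤ b) :
    ∃ y ∈ closure S, g y ≤ a := by
  have hne : S.Nonempty :=
    let ⟨b, hb⟩ := exists_gt a
    let ⟨z, hz, _⟩ := h b hb
    ⟨z, hz⟩
  obtain ⟨y, hy, hmin⟩ := hg.exists_isMinOn hne.closure hS
  refine ⟨y, hy, le_of_forall_gt_imp_ge_of_dense fun b hb => ?_⟩
  obtain ⟨z, hz, hzb⟩ := h b hb
  exact (hmin (subset_closure hz)).trans hzb

section

variable {n p q : ℕ} {f : ℝ → Evec n → Evec p → Evec q → Evec n}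
  {U : Set (Evec p)} {V : Set (Evec q)}
  {sol : ℝ → Evec n → (ℝ → Evec p) → (ℝ → Evec q) → ℝ → Evec n}
  {t₀ t t' ℓ : ℝ} {x : Evec n} {φ : ℝ → Evec n → ℝ}

theorem IsSolOp.dist_le (hsol : IsSolOp f U V sol) (ht : t ∈ Icc (0 : ℝ) 1) (ht' : t' ∈ Icc t 1)
    {u : ℝ → Evec p} {v : ℝ → Evec q} (hu : IsControl U u) (hv : IsControl V v) {M : ℝ}
    (hM : ∀ s ∈ Icc (0 : ℝ) 1, ∀ y, ‖f s y (u s) (v s)‖ ≤ M) :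
    dist (sol t x u v t') x ≤ M * (t' - t) := by
  rw [dist_eq_norm, (hsol t ht x u v hu hv).2 t' ht', add_sub_cancel_left,
    ← abs_of_nonneg (sub_nonneg.2 ht'.1)]
  refine intervalIntegral.norm_integral_le_of_norm_le_const fun s hs => ?_
  rw [uIoc_of_le ht'.1] at hs
  exact hM s ⟨ht.1.trans hs.1.le, hs.2.trans ht'.2⟩ _

theorem IsSolOp.isBounded_reachableSet (hsol : IsSolOp f U V sol) (ht : t ∈ Icc (0 : ℝ) 1)
    (ht' : t' ∈ Icc t 1) {u : ℝ → Evec p} (hu : IsControl U u) {M : ℝ}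
    (hM : ∀ s ∈ Icc (0 : ℝ) 1, ∀ y, ∀ v ∈ V, ‖f s y (u s) v‖ ≤ M) :
    Bornology.IsBounded (reachableSet V sol t x u t') := by
  refine (isBounded_closedBall (x := x) (r := M * (t' - t))).subset ?_
  rintro _ ⟨v, hv, rfl⟩
  exact hsol.dist_le ht ht' hu hv fun s hs y => hM s hs y (v s) (hv.2 s)

theorem PhiII.exists_mem_closure_reachableSet_le (hφ : PhiII U V sol t₀ φ)
    (ht : t ∈ Icc t₀ 1) (ht' : t' ∈ Icc t 1) (hlsc : LowerSemicontinuous (φ t'))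
    {u : Evec p} (hu : u ∈ U)
    (hR : Bornology.IsBounded (reachableSet V sol t x (fun _ => u) t')) :
    ∃ y ∈ closure (reachableSet V sol t x (fun _ => u) t'), φ t' y ≤ φ t x := by
  refine exists_mem_closure_le_of_forall_gt hR.isCompact_closure
    (hlsc.lowerSemicontinuousOn _) fun b hb => ?_
  obtain ⟨v, hv, hle⟩ := hφ t ht x t' ht' u hu (b - φ t x) (sub_pos.2 hb)
  exact ⟨_, mem_image_of_mem _ hv, hle.trans_eq (add_sub_cancel _ _)⟩

theorem sec_levelSet (ht : t ∈ Icc t₀ 1) : sec (levelSet t₀ φ ℓ) t = φ t ⁻¹' Iic ℓ :=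
  ext fun _ => and_iff_right ht

theorem propP1_levelSet (hφ1 : PhiI t₀ φ) (hφ2 : PhiII U V sol t₀ φ) (hU : U.Nonempty)
    (hR : ∀ t' ∈ Icc t₀ 1, ∀ u ∈ U,
      Bornology.IsBounded (reachableSet V sol t₀ x (fun _ => u) t'))
    (hx : φ t₀ x ≤ ℓ) : PropP1 t₀ (levelSet t₀ φ ℓ) := by
  intro t ht
  rw [sec_levelSet ht]
  refine ⟨(hφ1 t ht).isClosed_preimage ℓ, ?_⟩
  obtain ⟨u, hu⟩ := hU
  obtain ⟨y, -, hy⟩ := hφ2.exists_mem_closure_reachableSet_le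
    (left_mem_Icc.2 (ht.1.trans ht.2)) ht (hφ1 t ht) hu (hR t ht u hu)
  exact ⟨y, hy.trans hx⟩

theorem propP2_levelSet (hφ1 : PhiI t₀ φ) (hφ2 : PhiII U V sol t₀ φ)
    (hR : ∀ t ∈ Icc t₀ 1, ∀ x, ∀ t' ∈ Icc t 1, ∀ u ∈ U,
      Bornology.IsBounded (reachableSet V sol t x (fun _ => u) t')) :
    PropP2 U V sol (levelSet t₀ φ ℓ) := by
  rintro t x ⟨ht, hx⟩ t' ht' u hu ε hε
  have ht'₀ : t' ∈ Icc t₀ 1 := Icc_subset_Icc_left ht.1 ht'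
  obtain ⟨y, hy, hyx⟩ :=
    hφ2.exists_mem_closure_reachableSet_le ht ht' (hφ1 t' ht'₀) hu (hR t ht x t' ht' u hu)
  have hy_mem : y ∈ sec (levelSet t₀ φ ℓ) t' := ⟨ht'₀, hyx.trans hx⟩
  obtain ⟨_, ⟨v, hv, rfl⟩, hdist⟩ := Metric.mem_closure_iff.1 hy ε hε
  exact ⟨v, hv, (infDist_le_dist_of_mem hy_mem).trans_lt (dist_comm y _ ▸ hdist)⟩

theorem statement7_general (hU : U.Nonempty)
    (hf : ∀ u ∈ U, ∃ M, ∀ s ∈ Icc (0 : ℝ) 1, ∀ y, ∀ v ∈ V, ‖f s y u v‖ ≤ M)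
    (hsol : IsSolOp f U V sol) (ht₀ : 0 ≤ t₀) (hφ1 : PhiI t₀ φ) (hφ2 : PhiII U V sol t₀ φ)
    (hx : φ t₀ x ≤ ℓ) :
    PropP1 t₀ (levelSet t₀ φ ℓ) ∧ PropP2 U V sol (levelSet t₀ φ ℓ) := by
  have hR : ∀ t ∈ Icc t₀ 1, ∀ x, ∀ t' ∈ Icc t 1, ∀ u ∈ U,
      Bornology.IsBounded (reachableSet V sol t x (fun _ => u) t') := by
    intro t ht x t' ht' u hu
    obtain ⟨M, hM⟩ := hf u hu
    exact hsol.isBounded_reachableSet (Icc_subset_Icc_left ht₀ ht) ht'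
      ⟨measurable_const, fun _ => hu⟩ hM
  exact ⟨propP1_levelSet hφ1 hφ2 hU
    (fun t' ht' => hR t₀ (left_mem_Icc.2 (ht'.1.trans ht'.2)) x t' ht') hx,
    propP2_levelSet hφ1 hφ2 hR⟩

end

/-- Lemma 2: if `φ` satisfies (i) and (ii), then for every
`ℓ ≥ φ(t₀,x₀)` the level set `𝒲^φ_ℓ = {(t,x) ∈ [t₀,1] × ℝⁿ : φ(t,x) ≤ ℓ}`
satisfies P1 and P2. -/
theorem statement7 {n p q : ℕ}
    (f : ℝ → Evec n → Evec p → Evec q → Evec n)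
    (U : Set (Evec p)) (V : Set (Evec q)) (Mf c : ℝ)
    (hA1 : Assumption1 f U V Mf c)
    (sol : ℝ → Evec n → (ℝ → Evec p) → (ℝ → Evec q) → ℝ → Evec n)
    (hsol : IsSolOp f U V sol)
    (t₀ : ℝ) (ht₀ : t₀ ∈ Icc (0:ℝ) 1)
    (x₀ : Evec n)
    (φ : ℝ → Evec n → ℝ)
    (hφ1 : PhiI t₀ φ) (hφ2 : PhiII U V sol t₀ φ) :
    ∀ ℓ : ℝ, φ t₀ x₀ ≤ ℓ →
      PropP1 t₀ {z : ℝ × Evec n | z.1 ∈ Icc t₀ 1 ∧ φ z.1 z.2 ≤ ℓ} ∧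
      PropP2 U V sol {z : ℝ × Evec n | z.1 ∈ Icc t₀ 1 ∧ φ z.1 z.2 ≤ ℓ} :=
  fun _ hℓ => statement7_general hA1.nonemptyU
    (fun u hu => ⟨Mf, fun s hs y v hv => hA1.bounded s hs y u hu v hv⟩) hsol ht₀.1 hφ1 hφ2 hℓ
end
end
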